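/- Let G be a group, K ⊆ G a subset, φ : G → ℝ a homogeneous quasi-morphism with defect at most D, and C ≥ 0 a constant with |φ(k)| ≤ C for all k ∈ K. Let g ∈ G and n ≥ 1 a natural number. If gⁿ can be written as a product of N elements (N ≥ 1), each conjugate to an element of K or to the inverse of an element of K, then n·|φ(g)| ≤ N·(D + C); equivalently, if also φ(g) ≠ 0 and D + C > 0, then log n + log(|φ(g)|/(D + C)) ≤ log N. -/

import Mathlib

/-!
Comparing `φ (c * x)` with `φ (y * c)` shows that a quasi-morphism changes by at most `2 D` under
conjugation. Applied to all powers, this forces a homogeneous one to be constant on conjugacy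
classes, so it is bounded by `C` on every conjugate of an element of `K ∪ K⁻¹`. A product `x` of
`N` such elements has `|φ x| ≤ N (D + C)`, while `|φ (g ^ n)| = n |φ g|`.
-/

lemma abs_list_sum_le_length_nsmul {A : Type*} [AddCommGroup A] [LinearOrder A]
    [IsOrderedAddMonoid A] {l : List A} {C : A} (h : ∀ a ∈ l, |a| ≤ C) :
    |l.sum| ≤ l.length • C := by
  rw [abs_le, ← neg_nsmul]
  exact ⟨l.card_nsmul_le_sum (-C) fun a ha ↦ (abs_le.1 (h a ha)).1,
    l.sum_le_card_nsmul C fun a ha ↦ (abs_le.1 (h a ha)).2⟩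

lemma eq_zero_of_forall_abs_nsmul_le {A : Type*} [AddCommGroup A] [LinearOrder A]
    [IsOrderedAddMonoid A] [Archimedean A] {a B : A} (h : ∀ n : ℕ, |n • a| ≤ B) : a = 0 := by
  by_contra ha
  obtain ⟨n, hn⟩ := exists_lt_nsmul (abs_pos.2 ha) B
  exact (h n).not_gt (abs_nsmul n a ▸ hn)

lemma log_add_log_div_le_log_iff {a b c d : ℝ} (ha : 0 < a) (hb : 0 < b) (hc : 0 < c)
    (hd : 0 < d) : Real.log a + Real.log (b / c) ≤ Real.log d ↔ a * b ≤ d * c := by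
  have hbc : 0 < b / c := div_pos hb hc
  rw [← Real.log_mul ha.ne' hbc.ne', Real.log_le_log_iff (mul_pos ha hbc) hd, ← mul_div_assoc,
    div_le_iff₀ hc]

section Defect

variable {M A : Type*} [AddCommGroup A] [LinearOrder A]

/-- `φ` is a quasi-morphism of defect at most `D`. The codomain is any linearly ordered abelian
group; the classical case is `ℝ`. -/
def HasDefectLE [Mul M] (φ : M → A) (D : A) : Prop :=
  ∀ g h : M, |φ (g * h) - φ g - φ h| ≤ D

variable [IsOrderedAddMonoid A] {φ : M → A} {D : A}

namespace HasDefectLE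

lemma abs_map_sub_map_le_of_semiconjBy [Mul M] (hφ : HasDefectLE φ D) {c x y : M}
    (h : SemiconjBy c x y) : |φ y - φ x| ≤ 2 • D :=
  calc |φ y - φ x|
      = |(φ (c * x) - φ c - φ x) - (φ (y * c) - φ y - φ c)| := by
        rw [h.eq]
        congr 1
        abel
    _ ≤ |φ (c * x) - φ c - φ x| + |φ (y * c) - φ y - φ c| := abs_sub _ _
    _ ≤ D + D := add_le_add (hφ c x) (hφ y c)
    _ = 2 • D := (two_nsmul D).symm

lemma abs_map_prod_sub_sum_le [Monoid M] (hφ : HasDefectLE φ D) (hφ_one : φ 1 = 0) (l : List M) :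
    |φ l.prod - (l.map φ).sum| ≤ l.length • D := by
  induction l with
  | nil => simp [hφ_one]
  | cons a l ih =>
    calc |φ (a :: l).prod - ((a :: l).map φ).sum|
        = |(φ (a * l.prod) - φ a - φ l.prod) + (φ l.prod - (l.map φ).sum)| := by
          rw [List.prod_cons, List.map_cons, List.sum_cons]
          congr 1
          abel
      _ ≤ |φ (a * l.prod) - φ a - φ l.prod| + |φ l.prod - (l.map φ).sum| := abs_add_le _ _
      _ ≤ D + l.length • D := add_le_add (hφ a l.prod) ih
      _ = (a :: l).length • D := by rw [List.length_cons, succ_nsmul']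

lemma abs_map_prod_le [Monoid M] (hφ : HasDefectLE φ D) (hφ_one : φ 1 = 0) {C : A} {l : List M}
    (hC : ∀ x ∈ l, |φ x| ≤ C) : |φ l.prod| ≤ l.length • (D + C) := by
  have hsum : |(l.map φ).sum| ≤ l.length • C := by
    simpa only [List.length_map] using
      abs_list_sum_le_length_nsmul (List.forall_mem_map.2 hC)
  calc |φ l.prod| = |(φ l.prod - (l.map φ).sum) + (l.map φ).sum| := by rw [sub_add_cancel]
    _ ≤ |φ l.prod - (l.map φ).sum| + |(l.map φ).sum| := abs_add_le _ _
    _ ≤ l.length • D + l.length • C := add_le_add (hφ.abs_map_prod_sub_sum_le hφ_one l) hsum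
    _ = l.length • (D + C) := (nsmul_add D C _).symm

end HasDefectLE

end Defect

section Homogeneous

variable {G A : Type*} [Group G] [AddCommGroup A]

/-- Homogeneity of a quasi-morphism: `φ` turns integer powers into integer multiples. -/
def IsZPowHomogeneous (φ : G → A) : Prop :=
  ∀ (g : G) (p : ℤ), φ (g ^ p) = p • φ g

namespace IsZPowHomogeneous

variable {φ : G → A}

lemma map_pow (hφ : IsZPowHomogeneous φ) (g : G) (n : ℕ) : φ (g ^ n) = n • φ g := by
  simpa only [zpow_natCast, natCast_zsmul] using hφ g n

lemma map_one (hφ : IsZPowHomogeneous φ) : φ 1 = 0 := by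
  simpa only [pow_zero, zero_nsmul] using hφ.map_pow 1 0

lemma map_inv (hφ : IsZPowHomogeneous φ) (g : G) : φ g⁻¹ = -φ g := by
  simpa only [zpow_neg_one, neg_one_zsmul] using hφ g (-1)

variable [LinearOrder A] [IsOrderedAddMonoid A] [Archimedean A] {D : A}

lemma map_eq_of_isConj (hφ : IsZPowHomogeneous φ) (hD : HasDefectLE φ D) {x y : G}
    (h : IsConj x y) : φ y = φ x := by
  obtain ⟨c, hc⟩ := h
  refine sub_eq_zero.1 (eq_zero_of_forall_abs_nsmul_le (B := 2 • D) fun n ↦ ?_)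
  rw [nsmul_sub, ← hφ.map_pow, ← hφ.map_pow]
  exact hD.abs_map_sub_map_le_of_semiconjBy (hc.pow_right n)

lemma abs_map_eq_of_isConj_or_isConj_inv (hφ : IsZPowHomogeneous φ) (hD : HasDefectLE φ D)
    {k x : G} (h : IsConj k x ∨ IsConj k⁻¹ x) : |φ x| = |φ k| := by
  rcases h with h | h
  · rw [hφ.map_eq_of_isConj hD h]
  · rw [hφ.map_eq_of_isConj hD h, hφ.map_inv, abs_neg]

lemma nsmul_abs_map_le_of_prod_eq_pow (hφ : IsZPowHomogeneous φ) (hD : HasDefectLE φ D)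
    {K : Set G} {C : A} (hK : ∀ k ∈ K, |φ k| ≤ C) {g : G} {n : ℕ} {l : List G}
    (hprod : l.prod = g ^ n) (hmem : ∀ x ∈ l, ∃ k ∈ K, IsConj k x ∨ IsConj k⁻¹ x) :
    n • |φ g| ≤ l.length • (D + C) := by
  have hbound : ∀ x ∈ l, |φ x| ≤ C := fun x hx ↦ by
    obtain ⟨k, hk, hkx⟩ := hmem x hx
    exact (hφ.abs_map_eq_of_isConj_or_isConj_inv hD hkx).trans_le (hK k hk)
  calc n • |φ g| = |φ l.prod| := by rw [hprod, hφ.map_pow, abs_nsmul]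
    _ ≤ l.length • (D + C) := hD.abs_map_prod_le hφ.map_one hbound

end IsZPowHomogeneous

end Homogeneous

/-- If `φ` is a homogeneous quasi-morphism with defect at most `D`, bounded by `C`
on `K`, and `gⁿ` (`n ≥ 1`) is a product of `N ≥ 1` conjugates of elements of
`K ∪ K⁻¹`, then `n |φ(g)| ≤ N (D + C)`; equivalently, if moreover `φ(g) ≠ 0` and
`D + C > 0`, then `log n + log (|φ(g)| / (D + C)) ≤ log N`. -/
theorem quasimorphism_power_estimate {G : Type*} [Group G] (K : Set G)
    (φ : G → ℝ) (D C : ℝ)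
    (hD : ∀ g h : G, |φ (g * h) - φ g - φ h| ≤ D)
    (hhom : ∀ (g : G) (p : ℤ), φ (g ^ p) = p * φ g)
    (hC : 0 ≤ C) (hCK : ∀ k ∈ K, |φ k| ≤ C)
    (g : G) (n : ℕ) (hn : 1 ≤ n)
    (l : List G) (hlen : 1 ≤ l.length) (hprod : l.prod = g ^ n)
    (hmem : ∀ x ∈ l, ∃ k ∈ K, IsConj k x ∨ IsConj k⁻¹ x) :
    (n : ℝ) * |φ g| ≤ (l.length : ℝ) * (D + C) ∧
    (φ g ≠ 0 → 0 < D + C →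
      Real.log n + Real.log (|φ g| / (D + C)) ≤ Real.log l.length) := by
  have hφ : IsZPowHomogeneous φ := fun g p ↦ by rw [hhom, zsmul_eq_mul]
  have hmain : (n : ℝ) * |φ g| ≤ (l.length : ℝ) * (D + C) := by
    simpa only [nsmul_eq_mul] using
      hφ.nsmul_abs_map_le_of_prod_eq_pow hD hCK hprod hmem
  exact ⟨hmain, fun hg hDC ↦ (log_add_log_div_le_log_iff (Nat.cast_pos.2 hn) (abs_pos.2 hg) hDC
    (Nat.cast_pos.2 hlen)).2 hmain⟩
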